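/- arXiv:2509.15000 — 4 statements merged into one kernel-verified Lean document; each statement's English description precedes it below -/
import Mathlib

section
/- Let G be an infinite, connected, locally finite simple graph with exactly one end and let T be a spanning tree of G. Then T has exactly one end if and only if every edge of T lies in only finitely many fundamental cycles, i.e., for every edge e of T the set of edges f of G not in T whose fundamental cycle with respect to T contains e is finite. -/
open SimpleGraph

/-!
A locally finite connected graph has at most one end iff each of its finite edge cuts has a finite
side; this reduces both directions to comparing cuts of `G` with cuts of `T`.

Deleting a tree edge `e` splits `T` into two sides, and the non-tree edges whose fundamental cycle
passes through `e` are exactly the non-tree edges of `G` joining these sides. If `T` is one-ended,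
one of the sides is finite, so by local finiteness only finitely many edges of `G` join them.

Conversely, an edge of `G` across a cut of `T` is either a tree edge of the cut, or its fundamental
cycle passes through one. Hence if every tree edge lies in finitely many fundamental cycles, a
finite cut of `T` is still a finite cut of `G`, and one of its sides is finite as `G` is one-ended.
-/

section Sections

open CategoryTheory

universe u v w

theorem exists_mem_sections_eq_of_mem_eventualRange {J : Type u} [Category.{w} J]
    [IsCofilteredOrEmpty J] (F : J ⥤ Type v) [∀ j, Finite (F.obj j)] {j : J} {x : F.obj j}
    (hx : x ∈ F.eventualRange j) : ∃ s ∈ F.sections, s j = x := by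
  have hML : F.IsMittagLeffler :=
    F.isMittagLeffler_of_exists_finite_range fun i => ⟨i, 𝟙 i, Set.toFinite _⟩
  have hne (i : J) : Nonempty (F.obj i) := by
    obtain ⟨k, toI, toJ, -⟩ := IsCofilteredOrEmpty.cone_objs i j
    obtain ⟨y, -⟩ := F.mem_eventualRange_iff.1 hx toJ
    exact ⟨F.map toI y⟩
  have hneRange (i : J) : Nonempty (F.toEventualRanges.obj i) := F.toEventualRanges_nonempty hML i
  obtain ⟨t, ht⟩ := F.toEventualRanges.eval_section_surjective_of_surjective
    (F.surjective_toEventualRanges hML) j ⟨x, hx⟩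
  exact ⟨_, (F.toEventualRangesSectionsEquiv t).2, congrArg Subtype.val ht⟩

end Sections

section EdgeCut

variable {V : Type*} {G : SimpleGraph V} {A : Set V} {x y : V}

/-- The edge cut of `G` with sides `A` and `Aᶜ`: the edges having an endpoint on either side. -/
def edgeCut (G : SimpleGraph V) (A : Set V) : Set (Sym2 V) :=
  {e | e ∈ G.edgeSet ∧ (∃ x ∈ e, x ∈ A) ∧ ∃ y ∈ e, y ∉ A}

theorem mk_mem_edgeCut : s(x, y) ∈ edgeCut G A ↔ G.Adj x y ∧ (x ∈ A ↔ y ∉ A) := by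
  simp only [edgeCut, Set.mem_ofPred_eq, mem_edgeSet, Sym2.mem_iff, exists_eq_or_imp,
    exists_eq_left]
  tauto

theorem edgeCut_compl : edgeCut G Aᶜ = edgeCut G A := by
  ext ⟨x, y⟩
  simp only [mk_mem_edgeCut, Set.mem_compl_iff]
  tauto

theorem finite_biUnion_incidenceSet (hlf : ∀ v, (G.neighborSet v).Finite) (hA : A.Finite) :
    (⋃ v ∈ A, G.incidenceSet v).Finite := by
  classical
  refine hA.biUnion fun v _ => ?_
  have := (hlf v).to_subtype
  exact Finite.of_equiv _ (G.incidenceSetEquivNeighborSet v).symm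

theorem finite_edgeCut_of_finite (hlf : ∀ v, (G.neighborSet v).Finite) (hA : A.Finite) :
    (edgeCut G A).Finite :=
  (finite_biUnion_incidenceSet hlf hA).subset fun _ ⟨he, ⟨_, hx, hxA⟩, _⟩ =>
    Set.mem_biUnion hxA ⟨he, hx⟩

theorem mem_iff_mem_of_walk_avoiding_edgeCut (p : G.Walk x y)
    (hp : ∀ e ∈ p.edges, e ∉ edgeCut G A) : x ∈ A ↔ y ∈ A := by
  induction p with
  | nil => rfl
  | cons hadj q ih =>
    rw [Walk.edges_cons, List.forall_mem_cons, mk_mem_edgeCut] at hp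
    have := ih hp.2
    tauto

theorem mem_iff_notMem_of_isTrail_of_edgeCut_eq_singleton {e : Sym2 V} (hA : edgeCut G A = {e})
    (p : G.Walk x y) (hp : p.IsTrail) (he : e ∈ p.edges) : x ∈ A ↔ y ∉ A := by
  induction p with
  | nil => simp at he
  | @cons x z y hadj q ih =>
    obtain ⟨hq, hnotMem⟩ := (Walk.isTrail_cons hadj q).1 hp
    have hcut (f : Sym2 V) : f ∈ edgeCut G A ↔ f = e := by rw [hA, Set.mem_singleton_iff]
    by_cases hfirst : s(x, z) = e
    · have hcross : x ∈ A ↔ z ∉ A := (mk_mem_edgeCut.1 ((hcut _).2 hfirst)).2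
      have hrest : z ∈ A ↔ y ∈ A := by
        refine mem_iff_mem_of_walk_avoiding_edgeCut q fun f hf hfA => hnotMem ?_
        rwa [hfirst, ← (hcut f).1 hfA]
      rw [hcross, hrest]
    · have hsame : x ∈ A ↔ z ∈ A := by
        have := mk_mem_edgeCut.not.1 (mt (hcut _).1 hfirst)
        tauto
      have heq : e ∈ q.edges := (List.mem_cons.1 he).resolve_left (Ne.symm hfirst)
      exact hsame.trans (ih hq heq)

theorem exists_edgeCut_eq_singleton_of_isBridge {e : Sym2 V} (he : e ∈ G.edgeSet)
    (hbridge : G.IsBridge e) : ∃ A, edgeCut G A = {e} := by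
  induction e with | h u v
  have hsep : ¬ (G.deleteEdges {s(u, v)}).Reachable u v := isBridge_iff.1 hbridge
  refine ⟨{z | (G.deleteEdges {s(u, v)}).Reachable u z}, Set.eq_singleton_iff_unique_mem.2
    ⟨mk_mem_edgeCut.2 ⟨he, iff_of_true (Reachable.refl u) hsep⟩, ?_⟩⟩
  rintro ⟨x, y⟩ hxy
  obtain ⟨hadj, hcross⟩ := mk_mem_edgeCut.1 hxy
  by_contra hne
  have hreach : (G.deleteEdges {s(u, v)}).Reachable x y :=
    (deleteEdges_adj.2 ⟨hadj, hne⟩).reachable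
  have hsame : (G.deleteEdges {s(u, v)}).Reachable u x ↔
      (G.deleteEdges {s(u, v)}).Reachable u y :=
    ⟨fun h => h.trans hreach, fun h => h.trans hreach.symm⟩
  exact iff_not_self (hsame.symm.trans hcross)

end EdgeCut

section Ends

variable {V : Type*} {G : SimpleGraph V}

/-- No finite edge cut of `G` separates two infinite sets of vertices. For a locally finite
connected graph this says that there is at most one end. -/
def FiniteCutsHaveFiniteSide (G : SimpleGraph V) : Prop :=
  ∀ A : Set V, (edgeCut G A).Finite → A.Finite ∨ Aᶜ.Finite

theorem finite_componentCompl (hG : G.Preconnected) (hlf : ∀ v, (G.neighborSet v).Finite)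
    (K : Finset V) : Finite (G.ComponentCompl K) := by
  have : LocallyFinite G := fun v => (hlf v).fintype
  have : Fact G.Preconnected := ⟨hG⟩
  infer_instance

theorem infinite_supp_of_mem_end {s} (hs : s ∈ G.end) (K : (Finset V)ᵒᵖ) :
    (ComponentCompl.supp (s K)).Infinite :=
  (ComponentCompl.infinite_iff_in_all_ranges (K := K.unop) (s K)).2 fun L hKL =>
    ⟨s (.op L), hs (CategoryTheory.opHomOfLE (x := K) (y := .op L) hKL)⟩

theorem exists_mem_end_of_infinite_supp (hG : G.Preconnected)
    (hlf : ∀ v, (G.neighborSet v).Finite) {K : Finset V} {C : G.ComponentCompl K}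
    (hC : C.supp.Infinite) : ∃ s ∈ G.end, s (.op K) = C := by
  have (L : (Finset V)ᵒᵖ) : Finite (G.componentComplFunctor.obj L) :=
    finite_componentCompl hG hlf L.unop
  exact exists_mem_sections_eq_of_mem_eventualRange G.componentComplFunctor
    ((G.infinite_iff_in_eventualRange (K := .op K) C).1 hC)

theorem exists_infinite_componentCompl_inter {K : Finset V} [Finite (G.ComponentCompl K)]
    {A : Set V} (hA : A.Infinite) : ∃ C : G.ComponentCompl K, (C.supp ∩ A).Infinite := by
  by_contra! hfin
  refine hA ((K.finite_toSet.union (Set.finite_iUnion hfin)).subset fun a ha => ?_)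
  by_cases haK : a ∈ (K : Set V)
  · exact .inl haK
  · exact .inr (Set.mem_iUnion.2 ⟨G.componentComplMk haK, G.componentComplMk_mem haK, ha⟩)

theorem nonempty_end [Infinite V] (hG : G.Preconnected) (hlf : ∀ v, (G.neighborSet v).Finite) :
    G.end.Nonempty := by
  have := finite_componentCompl hG hlf ∅
  obtain ⟨C, hC⟩ := exists_infinite_componentCompl_inter (G := G) (K := ∅) Set.infinite_univ
  obtain ⟨s, hs, -⟩ := exists_mem_end_of_infinite_supp hG hlf (hC.mono Set.inter_subset_left)
  exact ⟨s, hs⟩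

theorem finite_edgeCut_supp (hlf : ∀ v, (G.neighborSet v).Finite) {K : Finset V}
    (C : G.ComponentCompl K) : (edgeCut G C.supp).Finite := by
  refine (finite_biUnion_incidenceSet hlf K.finite_toSet).subset ?_
  rintro e ⟨he, ⟨x, hxe, hxC⟩, y, hye, hyC⟩
  have hxy : x ≠ y := fun h => hyC (h ▸ hxC)
  obtain rfl : e = s(x, y) := (Sym2.mem_and_mem_iff hxy).1 ⟨hxe, hye⟩
  have hyK : y ∈ (K : Set V) := by
    by_contra hyK
    exact hyC (ComponentCompl.mem_of_adj x y hxC hyK he)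
  exact Set.mem_biUnion hyK ⟨he, hye⟩

theorem mem_iff_mem_of_mem_componentCompl {K A : Set V}
    (hK : ∀ e ∈ edgeCut G A, ∃ x ∈ e, x ∈ K) {C : G.ComponentCompl K} {x y : V}
    (hx : x ∈ C) (hy : y ∈ C) : x ∈ A ↔ y ∈ A := by
  obtain ⟨hxK, hxC⟩ := hx
  obtain ⟨hyK, hyC⟩ := hy
  obtain ⟨p⟩ := ConnectedComponent.eq.1 (hxC.trans hyC.symm)
  refine mem_iff_mem_of_walk_avoiding_edgeCut (A := Subtype.val ⁻¹' A) p ?_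
  rintro ⟨a, b⟩ - hab
  obtain ⟨hadj, hcross⟩ := mk_mem_edgeCut.1 hab
  obtain ⟨z, hz, hzK⟩ := hK s(a.1, b.1) (mk_mem_edgeCut.2 ⟨hadj, hcross⟩)
  rcases Sym2.mem_iff.1 hz with rfl | rfl
  · exact a.2 hzK
  · exact b.2 hzK

theorem finiteCutsHaveFiniteSide_of_subsingleton_end (hG : G.Preconnected)
    (hlf : ∀ v, (G.neighborSet v).Finite) (hend : G.end.Subsingleton) :
    FiniteCutsHaveFiniteSide G := by
  classical
  intro A hcut
  by_contra! hinf
  let K : Finset V := hcut.toFinset.biUnion Sym2.toFinset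
  have hK : ∀ e ∈ edgeCut G A, ∃ x ∈ e, x ∈ (K : Set V) := by
    intro e he
    obtain ⟨x, hx, -⟩ := he.2.1
    exact ⟨x, hx, Finset.mem_biUnion.2 ⟨e, hcut.mem_toFinset.2 he, Sym2.mem_toFinset.2 hx⟩⟩
  have := finite_componentCompl hG hlf K
  obtain ⟨C, hC⟩ := exists_infinite_componentCompl_inter (G := G) (K := K) hinf.1
  obtain ⟨D, hD⟩ := exists_infinite_componentCompl_inter (G := G) (K := K) hinf.2
  obtain ⟨s, hs, rfl⟩ := exists_mem_end_of_infinite_supp hG hlf (hC.mono Set.inter_subset_left)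
  obtain ⟨t, ht, rfl⟩ := exists_mem_end_of_infinite_supp hG hlf (hD.mono Set.inter_subset_left)
  obtain rfl := hend hs ht
  obtain ⟨a, haC, haA⟩ := hC.nonempty
  obtain ⟨b, hbC, hbA⟩ := hD.nonempty
  exact hbA ((mem_iff_mem_of_mem_componentCompl hK haC hbC).1 haA)

theorem subsingleton_end_of_finiteCutsHaveFiniteSide (hlf : ∀ v, (G.neighborSet v).Finite)
    (hcuts : FiniteCutsHaveFiniteSide G) : G.end.Subsingleton := by
  intro s hs t ht
  funext K
  by_contra hne
  have hdisj : Disjoint (ComponentCompl.supp (s K)) (ComponentCompl.supp (t K)) :=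
    ComponentCompl.pairwise_disjoint hne
  rcases hcuts _ (finite_edgeCut_supp (K := K.unop) hlf (s K)) with hfin | hfin
  · exact infinite_supp_of_mem_end hs K hfin
  · exact infinite_supp_of_mem_end ht K (hfin.subset hdisj.subset_compl_left)

theorem subsingleton_end_iff_finiteCutsHaveFiniteSide (hG : G.Preconnected)
    (hlf : ∀ v, (G.neighborSet v).Finite) :
    G.end.Subsingleton ↔ FiniteCutsHaveFiniteSide G :=
  ⟨finiteCutsHaveFiniteSide_of_subsingleton_end hG hlf,
    subsingleton_end_of_finiteCutsHaveFiniteSide hlf⟩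

end Ends

section FundamentalCycles

variable {V : Type*} {G T : SimpleGraph V}

/-- The edges of `G` outside `T` whose fundamental cycle with respect to the spanning tree `T`
contains `e`. A fundamental cycle is represented by the non-tree edge defining it. -/
def fundamentalCyclesThrough (G T : SimpleGraph V) (e : Sym2 V) : Set (Sym2 V) :=
  {f | f ∈ G.edgeSet ∧ f ∉ T.edgeSet ∧
    ∃ x y : V, f = s(x, y) ∧ ∃ p : T.Walk x y, p.IsPath ∧ e ∈ p.edges}

theorem fundamentalCyclesThrough_subset_edgeCut {A : Set V} {e : Sym2 V}
    (hA : edgeCut T A = {e}) : fundamentalCyclesThrough G T e ⊆ edgeCut G A := by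
  rintro _ ⟨hf, -, x, y, rfl, p, hp, he⟩
  exact mk_mem_edgeCut.2
    ⟨hf, mem_iff_notMem_of_isTrail_of_edgeCut_eq_singleton hA p hp.isTrail he⟩

theorem edgeCut_subset_union_fundamentalCyclesThrough (hT : T.Preconnected) (A : Set V) :
    edgeCut G A ⊆ edgeCut T A ∪ ⋃ e ∈ edgeCut T A, fundamentalCyclesThrough G T e := by
  rintro ⟨x, y⟩ hxy
  obtain ⟨hadj, hcross⟩ := mk_mem_edgeCut.1 hxy
  by_cases hxyT : T.Adj x y
  · exact .inl (mk_mem_edgeCut.2 ⟨hxyT, hcross⟩)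
  · obtain ⟨p, hp⟩ := (hT x y).exists_isPath
    obtain ⟨e, hep, heA⟩ : ∃ e ∈ p.edges, e ∈ edgeCut T A := by
      by_contra! havoid
      exact iff_not_self ((mem_iff_mem_of_walk_avoiding_edgeCut p havoid).symm.trans hcross)
    exact .inr (Set.mem_biUnion heA ⟨hadj, hxyT, x, y, rfl, p, hp, hep⟩)

theorem finite_fundamentalCyclesThrough_of_isBridge (hlf : ∀ v, (G.neighborSet v).Finite)
    (hcuts : FiniteCutsHaveFiniteSide T) {e : Sym2 V} (he : e ∈ T.edgeSet)
    (hbridge : T.IsBridge e) : (fundamentalCyclesThrough G T e).Finite := by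
  obtain ⟨A, hA⟩ := exists_edgeCut_eq_singleton_of_isBridge he hbridge
  have hfin : (edgeCut G A).Finite := by
    rcases hcuts A (hA ▸ Set.finite_singleton e) with hside | hside
    · exact finite_edgeCut_of_finite hlf hside
    · exact edgeCut_compl (A := A) ▸ finite_edgeCut_of_finite hlf hside
  exact hfin.subset (fundamentalCyclesThrough_subset_edgeCut hA)

theorem finiteCutsHaveFiniteSide_of_finite_fundamentalCyclesThrough (hT : T.Preconnected)
    (hcuts : FiniteCutsHaveFiniteSide G)
    (hfin : ∀ e ∈ T.edgeSet, (fundamentalCyclesThrough G T e).Finite) :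
    FiniteCutsHaveFiniteSide T := fun A hA =>
  hcuts A ((hA.union (hA.biUnion fun e he => hfin e he.1)).subset
    (edgeCut_subset_union_fundamentalCyclesThrough hT A))

end FundamentalCycles

/-- For a spanning tree `T` of an infinite, connected, locally finite,
one-ended graph `G`, the tree `T` has exactly one end iff every edge of `T` lies in only
finitely many fundamental cycles (with respect to `T`). An edge `e` of `T` lies in the
fundamental cycle of a non-tree edge `f = s(x, y)` exactly when `e` is an edge of the
unique path in `T` from `x` to `y`. -/
theorem stmt2 {V : Type*} [Infinite V] (G : SimpleGraph V)
    (hconn : G.Connected) (hlf : ∀ v : V, (G.neighborSet v).Finite)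
    (hend : G.end.Nonempty ∧ G.end.Subsingleton)
    (T : SimpleGraph V) (hTG : T ≤ G) (hTconn : T.Connected) (hTacyc : T.IsAcyclic) :
    (T.end.Nonempty ∧ T.end.Subsingleton) ↔
      (∀ e ∈ T.edgeSet,
        {f : Sym2 V | f ∈ G.edgeSet ∧ f ∉ T.edgeSet ∧
          ∃ x y : V, f = s(x, y) ∧
            ∃ p : T.Walk x y, p.IsPath ∧ e ∈ p.edges}.Finite) := by
  have hTlf (v : V) : (T.neighborSet v).Finite := (hlf v).subset fun _ hw => hTG hw
  have hGcuts : FiniteCutsHaveFiniteSide G :=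
    finiteCutsHaveFiniteSide_of_subsingleton_end hconn.preconnected hlf hend.2
  rw [and_iff_right (nonempty_end hTconn.preconnected hTlf),
    subsingleton_end_iff_finiteCutsHaveFiniteSide hTconn.preconnected hTlf]
  exact ⟨fun hTcuts e he => finite_fundamentalCyclesThrough_of_isBridge hlf hTcuts he
      (isAcyclic_iff_forall_isBridge.1 hTacyc he),
    finiteCutsHaveFiniteSide_of_finite_fundamentalCyclesThrough hTconn.preconnected hGcuts⟩
end

section
/- Let G be an infinite, connected, locally finite simple graph with exactly one end. Let 𝓑 be a set of cycles of G that generates the cycle space of G: for every cycle C of G, the indicator function of the edge set of C (an element of the 𝔽₂-vector space of finitely supported functions from edges to ZMod 2) lies in the 𝔽₂-linear span of the indicator functions of the edge sets of the cycles in 𝓑. Let F be a finite set of vertices such that the induced subgraph G[F] is connected. Define ker(F) as the set of edges e of G[F] such that every cycle in 𝓑 containing e has all of its edges in G[F], and let H be the graph on F whose edges are the edges of G[F] not in ker(F). Call a vertex v ∈ F exterior if the connected component of v in H contains a vertex w that is the initial vertex of a ray in G whose only vertex in F is w. Then any two exterior vertices are joined by a path in H. -/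
open SimpleGraph

/-- The indicator function of the (finite) edge set of a walk, as an element of the
`𝔽₂`-vector space of finitely supported functions from edges to `ZMod 2`. -/
noncomputable def walkIndicator {V : Type*} {G : SimpleGraph V} {x : V} (w : G.Walk x x) :
    Sym2 V →₀ ZMod 2 :=
  letI := Classical.decEq (Sym2 V)
  ∑ e ∈ w.edges.toFinset, Finsupp.single e 1

/-- The edges of the induced subgraph `G[F]`: edges of `G` with both endpoints in `F`. -/
def edgesWithin {V : Type*} (G : SimpleGraph V) (F : Set V) : Set (Sym2 V) :=
  {e | e ∈ G.edgeSet ∧ ∀ v ∈ e, v ∈ F}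

/-- `ker F` with respect to a family `𝓑` of cycles: the edges `e` of `G[F]` such that every
cycle of `𝓑` containing `e` has all of its edges in `G[F]`. -/
def kerEdges {V : Type*} (G : SimpleGraph V) (𝓑 : Set ((x : V) × G.Walk x x)) (F : Set V) :
    Set (Sym2 V) :=
  {e ∈ edgesWithin G F | ∀ b ∈ 𝓑, e ∈ b.2.edges → ∀ f ∈ b.2.edges, f ∈ edgesWithin G F}

/-- A ray in `G` starting at `v`. -/
def IsRay {V : Type*} (G : SimpleGraph V) (v : V) (r : ℕ → V) : Prop :=
  Function.Injective r ∧ r 0 = v ∧ ∀ n : ℕ, G.Adj (r n) (r (n + 1))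

/-! Let `H` be the graph of non-kernel edges, and label every vertex of `F` by its component in `H`.
Assign to each edge of `G[F]` the sum (over `𝔽₂`) of the labels of its endpoints, and `0` to every
other edge of `G`. This cochain is supported on `ker F`, so a cycle of `𝓑` on which it is not
identically zero lies in `G[F]`, where the sum telescopes; hence it sums to zero on every cycle of
`𝓑`, and therefore on every cycle of `G`. Since `G` has one end, two rays leaving `F` at `w₁` and
`w₂` can be joined outside `F`; closing up with a path of `G[F]` gives a cycle on which the cochain
sums to the label of `w₁` plus the label of `w₂`. -/

section Walks

variable {V : Type*} {G : SimpleGraph V} {F : Set V}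

theorem exists_isPath_support_subset_of_reachable_induce {x y : F}
    (h : (G.induce F).Reachable x y) :
    ∃ p : G.Walk x y, p.IsPath ∧ ∀ z ∈ p.support, z ∈ F := by
  obtain ⟨p, hp⟩ := h.exists_isPath
  refine ⟨p.map (Embedding.induce F).toHom, hp.map Subtype.val_injective, fun z hz => ?_⟩
  obtain ⟨a, -, rfl⟩ := List.mem_map.1 (Walk.support_map (Embedding.induce F).toHom p ▸ hz)
  exact a.2

theorem mem_edgesWithin_of_support_subset {x y : V} {p : G.Walk x y}
    (hp : ∀ z ∈ p.support, z ∈ F) {e : Sym2 V} (he : e ∈ p.edges) : e ∈ edgesWithin G F :=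
  ⟨p.edges_subset_edgeSet he, fun _ hz => hp _ (p.mem_support_of_mem_edges he hz)⟩

theorem exists_mem_support_of_mem_edges_cons_concat {u v a b : V} {q : G.Walk a b}
    {hva : G.Adj v a} {hbu : G.Adj b u} {e : Sym2 V}
    (he : e ∈ (Walk.cons hva (q.concat hbu)).edges) : ∃ z ∈ e, z ∈ q.support := by
  rw [Walk.edges_cons, Walk.edges_concat, List.concat_eq_append, List.mem_cons, List.mem_append,
    List.mem_singleton] at he
  rcases he with rfl | he | rfl
  · exact ⟨a, Sym2.mem_mk_right v a, q.start_mem_support⟩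
  · exact ⟨e.out.1, e.out_fst_mem, q.mem_support_of_mem_edges he e.out_fst_mem⟩
  · exact ⟨b, Sym2.mem_mk_left b u, q.end_mem_support⟩

theorem isCycle_append_cons_concat {u v a b : V} {p : G.Walk u v} {q : G.Walk a b}
    (hp : p.IsPath) (hq : q.IsPath) (hpq : p.support.Disjoint q.support) (huv : u ≠ v)
    (hva : G.Adj v a) (hbu : G.Adj b u) :
    (p.append (Walk.cons hva (q.concat hbu))).IsCycle := by
  have hu : u ∉ q.support := hpq p.start_mem_support
  have hv : v ∉ q.support := hpq p.end_mem_support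
  have hdetour : (Walk.cons hva (q.concat hbu)).IsPath := by
    refine (hq.concat hu hbu).cons ?_
    simp [Walk.support_concat, hv, huv.symm]
  have hup : u ∉ p.support.tail := by
    have hnodup := hp.support_nodup
    rw [← p.cons_tail_support] at hnodup
    exact (List.nodup_cons.1 hnodup).1
  refine hp.isCycle_append hdetour (fun z hzp hzq => ?_) (.inr (by simp))
  rw [Walk.support_cons, List.tail_cons, Walk.support_concat, List.mem_append,
    List.mem_singleton] at hzq
  rcases hzq with hzq | rfl
  · exact hpq (List.mem_of_mem_tail hzp) hzq
  · exact hup hzp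

end Walks

section Cochains

variable {V M : Type*} {G : SimpleGraph V} [AddCommGroup M]

/-- The coboundary of a vertex labelling: an edge is labelled by the sum of the labels of its
endpoints. There are no signs, so sums along walks telescope only in characteristic two. -/
def coboundary (σ : V → M) : Sym2 V → M :=
  Sym2.lift ⟨fun x y => σ x + σ y, fun _ _ => add_comm _ _⟩

variable [Module (ZMod 2) M]

theorem sum_map_coboundary_edges (σ : V → M) {x y : V} (p : G.Walk x y) :
    (p.edges.map (coboundary σ)).sum = σ x + σ y := by
  induction p with
  | nil => exact (ZModModule.add_self _).symm
  | @cons x y z hxy p ih =>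
    calc ((Walk.cons hxy p).edges.map (coboundary σ)).sum
        = σ x + σ y + (σ y + σ z) := by
          rw [Walk.edges_cons, List.map_cons, List.sum_cons, ih]; rfl
      _ = σ x + σ z := by rw [add_assoc, ← add_assoc (σ y), ZModModule.add_self, zero_add]

theorem sum_map_indicator_coboundary_edges (σ : V → M) {s : Set (Sym2 V)} {x y : V}
    {p : G.Walk x y} (hp : ∀ e ∈ p.edges, e ∈ s) :
    (p.edges.map (s.indicator (coboundary σ))).sum = σ x + σ y := by
  rw [List.map_congr_left fun e he => Set.indicator_of_mem (hp e he) _, sum_map_coboundary_edges]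

theorem linearCombination_walkIndicator (f : Sym2 V → M) {x : V} {c : G.Walk x x}
    (hc : c.IsTrail) :
    Finsupp.linearCombination (ZMod 2) f (walkIndicator c) = (c.edges.map f).sum := by
  classical
  rw [← List.sum_toFinset f hc.edges_nodup, walkIndicator, map_sum]
  simp only [Finsupp.linearCombination_single, one_smul]
  congr!

theorem sum_map_edges_eq_zero_of_mem_span {𝓑 : Set ((x : V) × G.Walk x x)}
    (h𝓑 : ∀ b ∈ 𝓑, b.2.IsTrail) {f : Sym2 V → M} (hf : ∀ b ∈ 𝓑, (b.2.edges.map f).sum = 0)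
    {x : V} {c : G.Walk x x} (hc : c.IsTrail)
    (hspan : walkIndicator c ∈ Submodule.span (ZMod 2) ((fun b => walkIndicator b.2) '' 𝓑)) :
    (c.edges.map f).sum = 0 := by
  have hle : Submodule.span (ZMod 2) ((fun b => walkIndicator b.2) '' 𝓑) ≤
      LinearMap.ker (Finsupp.linearCombination (ZMod 2) f) := by
    rw [Submodule.span_le]
    rintro _ ⟨b, hb, rfl⟩
    exact (linearCombination_walkIndicator f (h𝓑 b hb)).trans (hf b hb)
  exact (linearCombination_walkIndicator f hc).symm.trans (hle hspan)

end Cochains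

section Kernel

variable {V M : Type*} {G : SimpleGraph V} {𝓑 : Set ((x : V) × G.Walk x x)} {F : Set V}

/-- The graph `H` of the edges of `G[F]` outside `ker F`. It is a graph on all of `V` in which the
vertices outside `F` are isolated. -/
def nonKerGraph (G : SimpleGraph V) (𝓑 : Set ((x : V) × G.Walk x x)) (F : Set V) :
    SimpleGraph V :=
  SimpleGraph.fromEdgeSet (edgesWithin G F \ kerEdges G 𝓑 F)

theorem nonKerGraph_adj_of_notMem_kerEdges {x y : V} (hxy : s(x, y) ∈ edgesWithin G F)
    (hker : s(x, y) ∉ kerEdges G 𝓑 F) : (nonKerGraph G 𝓑 F).Adj x y :=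
  (SimpleGraph.fromEdgeSet_adj _).2 ⟨⟨hxy, hker⟩, (G.mem_edgeSet.1 hxy.1).ne⟩

variable [AddCommGroup M] [Module (ZMod 2) M] {σ : V → M}

theorem indicator_coboundary_eq_zero_of_notMem_kerEdges
    (hσ : ∀ x y, (nonKerGraph G 𝓑 F).Adj x y → σ x = σ y) {e : Sym2 V}
    (he : e ∉ kerEdges G 𝓑 F) : (edgesWithin G F).indicator (coboundary σ) e = 0 := by
  refine Set.indicator_apply_eq_zero.2 fun hin => ?_
  induction e with | _ x y =>
  change σ x + σ y = 0
  rw [hσ x y (nonKerGraph_adj_of_notMem_kerEdges hin he), ZModModule.add_self]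

theorem sum_map_indicator_coboundary_eq_zero_of_mem
    (hσ : ∀ x y, (nonKerGraph G 𝓑 F).Adj x y → σ x = σ y) {b : (x : V) × G.Walk x x}
    (hb : b ∈ 𝓑) : (b.2.edges.map ((edgesWithin G F).indicator (coboundary σ))).sum = 0 := by
  by_cases hmeets : ∃ e ∈ b.2.edges, e ∈ kerEdges G 𝓑 F
  · obtain ⟨e, he, heker⟩ := hmeets
    have hwithin : ∀ f ∈ b.2.edges, f ∈ edgesWithin G F := heker.2 b hb he
    rw [sum_map_indicator_coboundary_edges σ hwithin, ZModModule.add_self]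
  · refine List.sum_eq_zero (List.forall_mem_map.2 fun e he => ?_)
    exact indicator_coboundary_eq_zero_of_notMem_kerEdges hσ fun heker => hmeets ⟨e, he, heker⟩

variable {u v a b : V} {hu : u ∈ F} {hv : v ∈ F} {ha : a ∈ Fᶜ} {hb : b ∈ Fᶜ}

theorem eq_of_forall_nonKerGraph_adj (h𝓑 : ∀ b ∈ 𝓑, b.2.IsTrail)
    (hgen : ∀ (x : V) (C : G.Walk x x), C.IsCycle →
      walkIndicator C ∈ Submodule.span (ZMod 2) ((fun b => walkIndicator b.2) '' 𝓑))
    (huv : (G.induce F).Reachable ⟨u, hu⟩ ⟨v, hv⟩)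
    (hab : (G.induce Fᶜ).Reachable ⟨a, ha⟩ ⟨b, hb⟩) (hva : G.Adj v a) (hbu : G.Adj b u)
    (hσ : ∀ x y, (nonKerGraph G 𝓑 F).Adj x y → σ x = σ y) : σ u = σ v := by
  obtain rfl | hne := eq_or_ne u v
  · rfl
  obtain ⟨p, hp, hpF⟩ := exists_isPath_support_subset_of_reachable_induce huv
  obtain ⟨q, hq, hqF⟩ := exists_isPath_support_subset_of_reachable_induce hab
  let φ := (edgesWithin G F).indicator (coboundary σ)
  have hcycle : (p.append (Walk.cons hva (q.concat hbu))).IsCycle :=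
    isCycle_append_cons_concat hp hq (fun z hzp hzq => hqF z hzq (hpF z hzp)) hne hva hbu
  have htotal : ((p.append (Walk.cons hva (q.concat hbu))).edges.map φ).sum = 0 :=
    sum_map_edges_eq_zero_of_mem_span h𝓑
      (fun _ => sum_map_indicator_coboundary_eq_zero_of_mem hσ) hcycle.isTrail (hgen _ _ hcycle)
  have hinside : (p.edges.map φ).sum = σ u + σ v :=
    sum_map_indicator_coboundary_edges σ fun _ => mem_edgesWithin_of_support_subset hpF
  have houtside : ((Walk.cons hva (q.concat hbu)).edges.map φ).sum = 0 := by
    refine List.sum_eq_zero (List.forall_mem_map.2 fun e he => ?_)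
    obtain ⟨z, hze, hzq⟩ := exists_mem_support_of_mem_edges_cons_concat he
    exact Set.indicator_of_notMem (fun hwithin => hqF z hzq (hwithin.2 z hze)) _
  rw [Walk.edges_append, List.map_append, List.sum_append, hinside, houtside, add_zero] at htotal
  rwa [← sub_eq_zero, ZModModule.sub_eq_add]

theorem nonKerGraph_reachable_of_reachable_compl (h𝓑 : ∀ b ∈ 𝓑, b.2.IsTrail)
    (hgen : ∀ (x : V) (C : G.Walk x x), C.IsCycle →
      walkIndicator C ∈ Submodule.span (ZMod 2) ((fun b => walkIndicator b.2) '' 𝓑))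
    (huv : (G.induce F).Reachable ⟨u, hu⟩ ⟨v, hv⟩)
    (hab : (G.induce Fᶜ).Reachable ⟨a, ha⟩ ⟨b, hb⟩) (hva : G.Adj v a) (hbu : G.Adj b u) :
    (nonKerGraph G 𝓑 F).Reachable u v := by
  let σ (x : V) : (nonKerGraph G 𝓑 F).ConnectedComponent →₀ ZMod 2 :=
    Finsupp.single ((nonKerGraph G 𝓑 F).connectedComponentMk x) 1
  have hσ : ∀ x y, (nonKerGraph G 𝓑 F).Adj x y → σ x = σ y := fun x y hxy =>
    congrArg (Finsupp.single · 1) (ConnectedComponent.sound hxy.reachable)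
  have hσuv : σ u = σ v := eq_of_forall_nonKerGraph_adj h𝓑 hgen huv hab hva hbu hσ
  exact ConnectedComponent.exact (Finsupp.single_left_injective one_ne_zero hσuv)

end Kernel

namespace IsRay

variable {V : Type*} {G : SimpleGraph V} {w w₁ w₂ : V} {r r₁ r₂ : ℕ → V}

theorem adj_one (hr : IsRay G w r) : G.Adj w (r 1) := by
  simpa only [hr.2.1] using hr.2.2 0

theorem exists_forall_ge_notMem (hr : IsRay G w r) {K : Set V} (hK : K.Finite) :
    ∃ N, ∀ n, N ≤ n → r n ∉ K := by
  have htendsto := hr.1.tendsto_cofinite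
  rw [Nat.cofinite_eq_atTop] at htendsto
  exact Filter.eventually_atTop.1 (htendsto.eventually hK.compl_mem_cofinite)

theorem componentComplMk_eq_of_le (hr : IsRay G w r) {K : Set V} {N n : ℕ}
    (hN : ∀ n, N ≤ n → r n ∉ K) (hn : N ≤ n) :
    G.componentComplMk (hN N le_rfl) = G.componentComplMk (hN n hn) := by
  induction n, hn using Nat.le_induction with
  | base => rfl
  | succ n hn ih => exact ih.trans (G.componentComplMk_eq_of_adj _ _ (hr.2.2 n))

theorem componentComplMk_eq (hr : IsRay G w r) {K : Set V} {M N : ℕ}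
    (hM : ∀ n, M ≤ n → r n ∉ K) (hN : ∀ n, N ≤ n → r n ∉ K) :
    G.componentComplMk (hM M le_rfl) = G.componentComplMk (hN N le_rfl) :=
  (hr.componentComplMk_eq_of_le hM (le_max_left M N)).trans
    (hr.componentComplMk_eq_of_le hN (le_max_right M N)).symm

theorem exists_mem_end_forall_eq_componentComplMk (hr : IsRay G w r) :
    ∃ s ∈ G.end, ∀ (K : Finset V) (N : ℕ) (hN : ∀ n, N ≤ n → r n ∉ (K : Set V)),
      s (Opposite.op K) = G.componentComplMk (hN N le_rfl) := by
  choose N hN using fun K : Finset V => hr.exists_forall_ge_notMem K.finite_toSet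
  refine ⟨fun K => G.componentComplMk (hN K.unop _ le_rfl), fun {L K} f => ?_,
    fun K _ hM => hr.componentComplMk_eq (hN K) hM⟩
  have hKL : K.unop ⊆ L.unop := CategoryTheory.le_of_op_hom f
  exact hr.componentComplMk_eq (fun n hn hmem => hN L.unop n hn (hKL hmem)) (hN K.unop)

theorem reachable_induce_compl (hend : G.end.Subsingleton) (hr₁ : IsRay G w₁ r₁)
    (hr₂ : IsRay G w₂ r₂) {K : Set V} (hK : K.Finite) {M N : ℕ}
    (hM : ∀ n, M ≤ n → r₁ n ∉ K) (hN : ∀ n, N ≤ n → r₂ n ∉ K) :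
    (G.induce Kᶜ).Reachable ⟨r₁ M, hM M le_rfl⟩ ⟨r₂ N, hN N le_rfl⟩ := by
  lift K to Finset V using hK
  obtain ⟨s₁, hs₁, hs₁r⟩ := hr₁.exists_mem_end_forall_eq_componentComplMk
  obtain ⟨s₂, hs₂, hs₂r⟩ := hr₂.exists_mem_end_forall_eq_componentComplMk
  obtain rfl : s₁ = s₂ := hend hs₁ hs₂
  exact ConnectedComponent.exact ((hs₁r K M hM).symm.trans (hs₂r K N hN))

end IsRay

/-- An exterior vertex of `F`: its component in `nonKerGraph G 𝓑 F` contains the initial vertex of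
a ray of `G` that meets `F` only there. -/
def IsExterior {V : Type*} (G : SimpleGraph V) (𝓑 : Set ((x : V) × G.Walk x x)) (F : Set V)
    (v : V) : Prop :=
  v ∈ F ∧ ∃ w ∈ F, (nonKerGraph G 𝓑 F).Reachable v w ∧
    ∃ r : ℕ → V, IsRay G w r ∧ ∀ n : ℕ, 0 < n → r n ∉ F

theorem stmt6_general {V : Type*} {G : SimpleGraph V} (hend : G.end.Subsingleton)
    {𝓑 : Set ((x : V) × G.Walk x x)} (h𝓑 : ∀ b ∈ 𝓑, b.2.IsTrail)
    (hgen : ∀ (x : V) (C : G.Walk x x), C.IsCycle →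
      walkIndicator C ∈ Submodule.span (ZMod 2) ((fun b => walkIndicator b.2) '' 𝓑))
    {F : Set V} (hF : F.Finite) (hFconn : (G.induce F).Preconnected) {u v : V}
    (hu : IsExterior G 𝓑 F u) (hv : IsExterior G 𝓑 F v) :
    (nonKerGraph G 𝓑 F).Reachable u v := by
  obtain ⟨-, w₁, hw₁, huw₁, r₁, hr₁, hr₁F⟩ := hu
  obtain ⟨-, w₂, hw₂, hvw₂, r₂, hr₂, hr₂F⟩ := hv
  have hinside : (G.induce F).Reachable ⟨w₁, hw₁⟩ ⟨w₂, hw₂⟩ := hFconn _ _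
  have houtside : (G.induce Fᶜ).Reachable ⟨r₂ 1, hr₂F 1 one_pos⟩ ⟨r₁ 1, hr₁F 1 one_pos⟩ :=
    hr₂.reachable_induce_compl hend hr₁ hF hr₂F hr₁F
  have hw₁w₂ : (nonKerGraph G 𝓑 F).Reachable w₁ w₂ :=
    nonKerGraph_reachable_of_reachable_compl h𝓑 hgen hinside houtside hr₂.adj_one hr₁.adj_one.symm
  exact huw₁.trans (hw₁w₂.trans hvw₂.symm)

/-- Let `G` be an infinite, connected, locally finite, one-ended graph, `𝓑` a
Borel family of cycles generating the cycle space of `G`, and `F` a finite set of vertices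
inducing a connected subgraph. Let `H` be the graph on `F` whose edges are the edges of
`G[F]` not in `ker F`. Then any two exterior vertices of `F` (vertices of `F` whose
`H`-component contains the initial vertex of a ray of `G` meeting `F` only at that vertex)
are joined by a path in `H`. -/
theorem stmt6 {V : Type*} [Infinite V] (G : SimpleGraph V)
    (hconn : G.Connected) (hlf : ∀ v : V, (G.neighborSet v).Finite)
    (hend : G.end.Nonempty ∧ G.end.Subsingleton)
    (𝓑 : Set ((x : V) × G.Walk x x)) (h𝓑 : ∀ b ∈ 𝓑, b.2.IsCycle)
    (hgen : ∀ (x : V) (C : G.Walk x x), C.IsCycle →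
      walkIndicator C ∈ Submodule.span (ZMod 2) ((fun b => walkIndicator b.2) '' 𝓑))
    (F : Set V) (hF : F.Finite) (hFconn : (G.induce F).Connected) :
    ∀ u v : V,
      (u ∈ F ∧ ∃ w ∈ F,
        (SimpleGraph.fromEdgeSet (edgesWithin G F \ kerEdges G 𝓑 F)).Reachable u w ∧
        ∃ r : ℕ → V, IsRay G w r ∧ ∀ n : ℕ, 0 < n → r n ∉ F) →
      (v ∈ F ∧ ∃ w ∈ F,
        (SimpleGraph.fromEdgeSet (edgesWithin G F \ kerEdges G 𝓑 F)).Reachable v w ∧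
        ∃ r : ℕ → V, IsRay G w r ∧ ∀ n : ℕ, 0 < n → r n ∉ F) →
      (SimpleGraph.fromEdgeSet (edgesWithin G F \ kerEdges G 𝓑 F)).Reachable u v :=
  fun _ _ => stmt6_general hend.2 (fun b hb => (h𝓑 b hb).isTrail) hgen hF hFconn.preconnected
end

section
/- Let T be an infinite, locally finite tree (a connected acyclic simple graph) with exactly one end, on vertex set V. Define recursively V₀ = V and V_{n+1} = the set of vertices of V_n whose degree in the induced subgraph T[V_n] is at least 2 (i.e., V_{n+1} is obtained from V_n by removing the isolated vertices and leaves of T[V_n]). Then for every n: the set V_n is nonempty, the induced subgraph T[V_n] is a tree (connected and acyclic) with exactly one end, and every connected component of the induced subgraph T[V ∖ V_n] is finite. -/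
open SimpleGraph

/-- Iterated leaf-removal: `leafPeel T 0 = V` and `leafPeel T (n+1)` consists of those
vertices of `leafPeel T n` having degree at least 2 in the induced subgraph
`T[leafPeel T n]`. -/
def leafPeel {V : Type*} (T : SimpleGraph V) : ℕ → Set V
  | 0 => Set.univ
  | n + 1 => {v ∈ leafPeel T n | 2 ≤ (T.neighborSet v ∩ leafPeel T n).ncard}

/-!
Every interior vertex of a path in `T[Vₙ]` has two neighbours in `Vₙ` and so survives to `Vₙ₊₁`.
Hence a path of `T` with both endpoints in `Vₙ` never leaves `Vₙ`, and `T[Vₙ]` is connected. If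
`Vₙ` is infinite, then from any of its vertices a path runs in `Vₙ` to a vertex at distance at
least two, and the second vertex of that path is a neighbour in `Vₙ₊₁`. So `Vₙ₊₁` is infinite, and
every vertex of `T` lies within distance `n` of `Vₙ`.

A component `C` of `T[V ∖ Vₙ]` is attached to `Vₙ` at a single vertex `u`: two attaching vertices
would be joined by a path through `C`. Therefore `C` lies in the ball of radius `n` around `u`,
which is finite. For each finite set `L`, the inclusion of `Vₙ` thus maps the components of
`T[Vₙ] - L` to those of `T - L` injectively, because paths between vertices of `Vₙ` stay in `Vₙ`,
and misses no infinite one, so it identifies the ends of `T[Vₙ]` with those of `T`.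
-/

universe u v

section Ends

variable {V : Type u} {W : Type v} {G : SimpleGraph V} {H : SimpleGraph W}

lemma infinite_supp_of_mem_end_s10 {e} (he : e ∈ G.end) (L : (Finset V)ᵒᵖ) :
    (e L).supp.Infinite := by
  refine (ComponentCompl.infinite_iff_in_all_ranges _).mpr fun M hLM => ?_
  exact ⟨e (Opposite.op M),
    he (CategoryTheory.opHomOfLE (x := L) (y := Opposite.op M) hLM)⟩

lemma end_hom_eq {e} (he : e ∈ G.end) {K L : Finset V} (hKL : K ⊆ L) :
    ComponentCompl.hom hKL (e (Opposite.op L)) = e (Opposite.op K) :=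
  he (CategoryTheory.opHomOfLE (x := Opposite.op K) (y := Opposite.op L) hKL)

variable (f : Copy G H)

/-- The map that a copy `f` of `G` in `H` induces from the components of `G` off the preimage of a
finite set `L` to the components of `H` off `L`. Injectivity of `f` makes the preimage finite. -/
noncomputable def componentComplMap (L : Finset W) :
    G.ComponentCompl (L.preimage f f.injective.injOn : Finset V) → H.ComponentCompl (L : Set W) :=
  ConnectedComponent.map (induceHom f.toHom fun _ hv hfv => hv (Finset.mem_preimage.2 hfv))

lemma componentComplMap_hom {L M : Finset W} (hLM : L ⊆ M)
    (C : G.ComponentCompl (M.preimage f f.injective.injOn : Finset V)) :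
    componentComplMap f L
        (C.hom (Finset.coe_subset.2 (Finset.monotone_preimage f.injective hLM))) =
      (componentComplMap f M C).hom hLM := by
  induction C using ComponentCompl.ind
  rfl

/-- The map on ends induced by a copy of `G` in `H`, that is, by an injective homomorphism. -/
noncomputable def endMap (e : G.end) : H.end where
  val L := componentComplMap f L.unop (e.1 (Opposite.op (L.unop.preimage f f.injective.injOn)))
  property φ :=
    (componentComplMap_hom f (CategoryTheory.le_of_op_hom φ) _).symm.trans
      (congrArg _ (end_hom_eq e.2 _))

lemma subset_preimage_image [DecidableEq W] (K : Finset V) :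
    K ⊆ (K.image f).preimage f f.injective.injOn :=
  (Finset.image_subset_iff_subset_preimage f.injective.injOn).1 subset_rfl

lemma exists_end_forall_preimage_eq
    (r : ∀ L : Finset W, G.ComponentCompl (L.preimage f f.injective.injOn : Finset V))
    (hr : ∀ ⦃L M : Finset W⦄ (hLM : L ⊆ M),
      (r M).hom (Finset.coe_subset.2 (Finset.monotone_preimage f.injective hLM)) = r L) :
    ∃ e : G.end, ∀ L, e.1 (Opposite.op (L.preimage f f.injective.injOn)) = r L := by
  classical
  let e (K : Finset V) : G.ComponentCompl (K : Set V) :=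
    (r (K.image f)).hom (subset_preimage_image f K)
  have he {K K' : Finset V} (hK : K' ⊆ K) : (e K).hom hK = e K' :=
    have himage : K'.image f ⊆ K.image f := Finset.image_subset_image hK
    calc (e K).hom hK
        = (r (K.image f)).hom (hK.trans (subset_preimage_image f K)) :=
          (ComponentCompl.hom_trans _ _ _).symm
      _ = ((r (K.image f)).hom _).hom (subset_preimage_image f K') :=
          ComponentCompl.hom_trans _
            (Finset.coe_subset.2 (Finset.monotone_preimage f.injective himage)) _
      _ = e K' := congrArg _ (hr himage)
  refine ⟨⟨fun K => e K.unop, fun φ => he (CategoryTheory.le_of_op_hom φ)⟩, fun L => ?_⟩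
  have hL : (L.preimage f f.injective.injOn).image f ⊆ L :=
    (Finset.image_subset_iff_subset_preimage f.injective.injOn).2 subset_rfl
  have hsub := subset_preimage_image f (L.preimage f f.injective.injOn)
  calc (r ((L.preimage f f.injective.injOn).image f)).hom hsub
      = ((r L).hom _).hom hsub := congrArg _ (hr hL).symm
    _ = (r L).hom Set.Subset.rfl := (ComponentCompl.hom_trans _
        (Finset.coe_subset.2 (Finset.monotone_preimage f.injective hL)) hsub).symm
    _ = r L := ComponentCompl.hom_refl _

lemma endMap_injective (hinj : ∀ L, Function.Injective (componentComplMap f L)) :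
    Function.Injective (endMap f) := by
  classical
  intro s t hst
  ext K
  have hK := subset_preimage_image f K.unop
  have hpreimage : s.1 (Opposite.op ((K.unop.image f).preimage f f.injective.injOn)) =
      t.1 (Opposite.op ((K.unop.image f).preimage f f.injective.injOn)) :=
    hinj _ (congrFun (congrArg Subtype.val hst) (Opposite.op (K.unop.image f)))
  exact (end_hom_eq s.2 hK).symm.trans
    ((congrArg (ComponentCompl.hom hK) hpreimage).trans (end_hom_eq t.2 hK))

lemma endMap_surjective (hinj : ∀ L, Function.Injective (componentComplMap f L))
    (hrange : ∀ (L : Finset W) (D : H.ComponentCompl (L : Set W)), D.supp.Infinite →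
      D ∈ Set.range (componentComplMap f L)) :
    Function.Surjective (endMap f) := by
  intro t
  choose r hr using fun L : Finset W =>
    hrange L (t.1 (Opposite.op L)) (infinite_supp_of_mem_end_s10 t.2 _)
  obtain ⟨e, he⟩ := exists_end_forall_preimage_eq f r fun L M hLM =>
    hinj L (by rw [componentComplMap_hom f hLM, hr, hr, end_hom_eq t.2])
  refine ⟨e, Subtype.ext (funext fun L => ?_)⟩
  exact (congrArg (componentComplMap f L.unop) (he L.unop)).trans (hr L.unop)

end Ends

section PathConvex

variable {V : Type u} {G : SimpleGraph V} {U : Set V}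

/-- A set `U` of vertices is path-convex if every path of `G` with both endpoints in `U` stays in
`U`. The stages of leaf removal have this property, and it controls their components and ends. -/
def IsPathConvex (G : SimpleGraph V) (U : Set V) : Prop :=
  ∀ ⦃a b : V⦄, a ∈ U → b ∈ U → ∀ p : G.Walk a b, p.IsPath → ∀ x ∈ p.support, x ∈ U

lemma finite_setOf_walk_length_le (hlf : ∀ v, (G.neighborSet v).Finite) (u : V) (n : ℕ) :
    {v | ∃ p : G.Walk v u, p.length ≤ n}.Finite := by
  induction n with
  | zero =>
    refine (Set.finite_singleton u).subset ?_
    rintro v ⟨p, hp⟩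
    exact Walk.eq_of_length_eq_zero (Nat.le_zero.1 hp)
  | succ n ih =>
    refine ((Set.finite_singleton u).union (ih.biUnion fun w _ => hlf w)).subset ?_
    rintro v ⟨_ | ⟨hvw, p⟩, hp⟩
    · exact Or.inl rfl
    · exact Or.inr (Set.mem_biUnion ⟨p, by simpa using hp⟩ hvw.symm)

lemma reachable_induce_iff_exists_isPath {S : Set V} {a b : V} (ha : a ∈ S) (hb : b ∈ S) :
    (G.induce S).Reachable ⟨a, ha⟩ ⟨b, hb⟩ ↔
      ∃ p : G.Walk a b, p.IsPath ∧ ∀ x ∈ p.support, x ∈ S := by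
  constructor
  · intro h
    obtain ⟨p, hp⟩ := h.exists_isPath
    refine ⟨p.map (Embedding.induce S).toHom,
      hp.map (Embedding.induce (G := G) S).injective, fun x hx => ?_⟩
    obtain ⟨y, -, rfl⟩ := List.mem_map.1 (Walk.support_map _ p ▸ hx)
    exact y.2
  · rintro ⟨p, -, hpS⟩
    exact ⟨p.induce S hpS⟩

lemma exists_mem_of_infinite_supp {L : Set V}
    (hfin : ∀ C : (G.induce Uᶜ).ConnectedComponent, C.supp.Finite) (D : G.ComponentCompl L)
    (hD : D.supp.Infinite) : ∃ v ∈ U, v ∈ D := by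
  by_contra! hDU
  have hDUc (x : (Lᶜ : Set V)) (hx : x ∈ ConnectedComponent.supp D) : x.1 ∈ Uᶜ :=
    fun hxU => hDU x hxU ⟨x.2, hx⟩
  let f : D.toSimpleGraph →g G.induce Uᶜ := ⟨fun x => ⟨x.1.1, hDUc x.1 x.2⟩, id⟩
  obtain ⟨v, hvL, hvD⟩ := hD.nonempty
  let C := (G.induce Uᶜ).connectedComponentMk (f ⟨⟨v, hvL⟩, hvD⟩)
  refine hD (((hfin C).image Subtype.val).subset ?_)
  rintro x ⟨hxL, hxD⟩
  refine ⟨f ⟨⟨x, hxL⟩, hxD⟩, ConnectedComponent.sound ?_, rfl⟩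
  exact (D.connected_toSimpleGraph.preconnected _ _).map f

namespace IsPathConvex

lemma preconnected_induce (hU : IsPathConvex G U) (hG : G.Preconnected) :
    (G.induce U).Preconnected := fun a b =>
  let ⟨p, hp⟩ := hG.exists_isPath a.1 b.1
  ⟨p.induce U (hU a.2 b.2 p hp)⟩

lemma componentComplMap_injective (hU : IsPathConvex G U) (L : Finset V) :
    Function.Injective (componentComplMap (Copy.induce G U) L) := by
  intro C D hCD
  obtain ⟨a, ha, rfl⟩ := C.exists_eq_mk
  obtain ⟨b, hb, rfl⟩ := D.exists_eq_mk
  obtain ⟨(p : G.Walk a b), hp, hpL⟩ :=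
    (reachable_induce_iff_exists_isPath _ _).1 (ConnectedComponent.exact hCD)
  refine ConnectedComponent.sound ⟨(p.induce U (hU a.2 b.2 p hp)).induce _ ?_⟩
  intro x hx hxL
  refine hpL x ?_ (Finset.mem_preimage.1 hxL)
  rwa [Walk.support_induce, List.mem_attachWith] at hx

lemma mem_support_of_adj_componentCompl (hU : IsPathConvex G U) {C : G.ComponentCompl U}
    {c u v d : V} (hc : c ∈ C) (hu : u ∈ U) (hcu : G.Adj c u) (hv : v ∈ C) (hd : d ∈ U)
    (p : G.Walk v d) : u ∈ p.support := by
  classical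
  by_contra hup
  obtain ⟨hcU, rfl⟩ := hc
  obtain ⟨hvU, hvc⟩ := hv
  obtain ⟨q, -, hqU⟩ := (reachable_induce_iff_exists_isPath _ _).1
    (ConnectedComponent.exact hvc.symm)
  have huqp : u ∉ (q.append p).bypass.support := fun h => by
    rcases (Walk.mem_support_append_iff _ _).1 (Walk.support_bypass_subset_support _ h) with h | h
    · exact hqU u h hu
    · exact hup h
  have hpath : (Walk.cons hcu.symm (q.append p).bypass).IsPath :=
    (Walk.bypass_isPath _).cons huqp
  exact hcU (hU hu hd _ hpath c (by simp))

lemma finite_supp_componentCompl (hU : IsPathConvex G U) (hG : G.Preconnected)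
    (hlf : ∀ v, (G.neighborSet v).Finite) {n : ℕ}
    (hdist : ∀ v, ∃ d ∈ U, ∃ p : G.Walk v d, p.length ≤ n)
    (C : (G.induce Uᶜ).ConnectedComponent) : C.supp.Finite := by
  classical
  obtain ⟨d₀, hd₀, -⟩ := hdist C.out.1
  obtain ⟨⟨c, u⟩, hc, hu, hcu⟩ := ComponentCompl.exists_adj_boundary_pair hG ⟨d₀, hd₀⟩ C
  refine Set.Finite.of_finite_image (f := Subtype.val)
    ((finite_setOf_walk_length_le hlf u n).subset ?_) Subtype.val_injective.injOn
  rintro _ ⟨v, hv, rfl⟩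
  obtain ⟨d, hd, p, hp⟩ := hdist v
  have hup := hU.mem_support_of_adj_componentCompl hc hu hcu ⟨v.2, hv⟩ hd p
  exact ⟨p.takeUntil u hup, (p.length_takeUntil_le_length hup).trans hp⟩

lemma endMap_bijective (hU : IsPathConvex G U)
    (hfin : ∀ C : (G.induce Uᶜ).ConnectedComponent, C.supp.Finite) :
    Function.Bijective (endMap (Copy.induce G U)) := by
  refine ⟨endMap_injective _ hU.componentComplMap_injective,
    endMap_surjective _ hU.componentComplMap_injective fun L D hD => ?_⟩
  obtain ⟨v, hvU, hvL, rfl⟩ := exists_mem_of_infinite_supp hfin D hD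
  exact ⟨(G.induce U).componentComplMk (v := ⟨v, hvU⟩) fun h => hvL (Finset.mem_preimage.1 h), rfl⟩

end IsPathConvex

end PathConvex

section LeafPeel

variable {V : Type u} {G : SimpleGraph V}

lemma two_le_ncard_neighborSet_inter_of_isPath {U : Set V} {a b x : V}
    (hx : (G.neighborSet x).Finite) {p : G.Walk a b} (hp : p.IsPath) (hpU : ∀ y ∈ p.support, y ∈ U)
    (hxp : x ∈ p.support) (hxa : x ≠ a) (hxb : x ≠ b) :
    2 ≤ (G.neighborSet x ∩ U).ncard := by
  obtain ⟨i, rfl, hi⟩ := Walk.mem_support_iff_exists_getVert.1 hxp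
  have hi₀ : i ≠ 0 := fun h => hxa (by simp [h])
  have hi₁ : i < p.length := hi.lt_of_ne fun h => hxb (by simp [h])
  rw [← hp.ncard_neighborSet_toSubgraph_internal_eq_two hi₀ hi₁]
  refine Set.ncard_le_ncard (fun y hy => ⟨hy.adj_sub, hpU y ?_⟩) (hx.inter_of_left _)
  exact p.mem_verts_toSubgraph.1 (Subgraph.Adj.snd_mem hy)

variable (hlf : ∀ v, (G.neighborSet v).Finite)
include hlf

lemma isPathConvex_leafPeel (n : ℕ) : IsPathConvex G (leafPeel G n) := by
  induction n with
  | zero => exact fun _ _ _ _ _ _ x _ => Set.mem_univ x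
  | succ n ih =>
    intro a b ha hb p hp x hx
    have hpn : ∀ y ∈ p.support, y ∈ leafPeel G n := ih ha.1 hb.1 p hp
    by_cases hxa : x = a
    · exact hxa ▸ ha
    by_cases hxb : x = b
    · exact hxb ▸ hb
    exact ⟨hpn x hx, two_le_ncard_neighborSet_inter_of_isPath (hlf x) hp hpn hx hxa hxb⟩

variable (hG : G.Preconnected)
include hG

lemma exists_adj_mem_leafPeel_succ {n : ℕ} (hinf : (leafPeel G n).Infinite) {v : V}
    (hv : v ∈ leafPeel G n) : ∃ w ∈ leafPeel G (n + 1), G.Adj v w := by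
  obtain ⟨x, hxn, hxv⟩ := (hinf.sdiff ((hlf v).insert v)).nonempty
  obtain ⟨p, hp⟩ := hG.exists_isPath v x
  have hpn := isPathConvex_leafPeel hlf n hv hxn p hp
  have hnil : ¬ p.Nil := fun h => hxv (Or.inl h.eq.symm)
  have hadj : G.Adj v p.snd := p.adj_snd hnil
  have hsnd : p.snd ∈ p.support := p.getVert_mem_support 1
  have hsnd_ne : p.snd ≠ x := fun h => hxv (Or.inr (h ▸ hadj))
  exact ⟨p.snd, ⟨hpn _ hsnd, two_le_ncard_neighborSet_inter_of_isPath (hlf _) hp hpn hsnd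
    hadj.ne' hsnd_ne⟩, hadj⟩

variable [Infinite V]

lemma infinite_leafPeel (n : ℕ) : (leafPeel G n).Infinite := by
  induction n with
  | zero => exact Set.infinite_univ
  | succ n ih =>
    refine fun hfin => ih ((hfin.biUnion fun w _ => hlf w).subset fun v hv => ?_)
    obtain ⟨w, hw, hvw⟩ := exists_adj_mem_leafPeel_succ hlf hG ih hv
    exact Set.mem_biUnion hw hvw.symm

lemma exists_walk_length_le_of_leafPeel (n : ℕ) (v : V) :
    ∃ w ∈ leafPeel G n, ∃ p : G.Walk v w, p.length ≤ n := by
  induction n with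
  | zero => exact ⟨v, Set.mem_univ v, Walk.nil, le_rfl⟩
  | succ n ih =>
    obtain ⟨w, hw, p, hp⟩ := ih
    obtain ⟨x, hx, hwx⟩ := exists_adj_mem_leafPeel_succ hlf hG (infinite_leafPeel hlf hG n) hw
    exact ⟨x, hx, p.concat hwx, by simpa using hp⟩

end LeafPeel

theorem stmt10_general {V : Type*} [Infinite V] (G : SimpleGraph V) (hG : G.Preconnected)
    (hlf : ∀ v : V, (G.neighborSet v).Finite) (n : ℕ) :
    (leafPeel G n).Infinite ∧
    (G.induce (leafPeel G n)).Connected ∧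
    Function.Bijective (endMap (Copy.induce G (leafPeel G n))) ∧
    (∀ c : (G.induce (leafPeel G n)ᶜ).ConnectedComponent, c.supp.Finite) := by
  have hinf := infinite_leafPeel hlf hG n
  have hconv := isPathConvex_leafPeel hlf n
  have hfin := hconv.finite_supp_componentCompl hG hlf (exists_walk_length_le_of_leafPeel hlf hG n)
  have := hinf.nonempty.to_subtype
  exact ⟨hinf, ⟨hconv.preconnected_induce hG⟩, hconv.endMap_bijective hfin, hfin⟩

/-- For an infinite, locally finite, one-ended tree `T`, each stage `Vₙ` of
the iterated leaf-removal is nonempty, induces a one-ended tree, and every connected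
component of the subgraph induced on the complement of `Vₙ` is finite. -/
theorem stmt10 {V : Type*} [Infinite V] (T : SimpleGraph V)
    (hconn : T.Connected) (hacyc : T.IsAcyclic)
    (hlf : ∀ v : V, (T.neighborSet v).Finite)
    (hend : T.end.Nonempty ∧ T.end.Subsingleton) :
    ∀ n : ℕ,
      (leafPeel T n).Nonempty ∧
      (T.induce (leafPeel T n)).Connected ∧
      (T.induce (leafPeel T n)).IsAcyclic ∧
      (T.induce (leafPeel T n)).end.Nonempty ∧
      (T.induce (leafPeel T n)).end.Subsingleton ∧
      (∀ c : (T.induce (leafPeel T n)ᶜ).ConnectedComponent, c.supp.Finite) := by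
  intro n
  obtain ⟨hinf, hconn_n, hbij, hfin⟩ := stmt10_general T hconn.preconnected hlf n
  have hne : Nonempty T.end := hend.1.to_subtype
  have hsub : Subsingleton T.end := hend.2.coe_sort
  exact ⟨hinf.nonempty, hconn_n, hacyc.induce _,
    Set.nonempty_coe_sort.1 (hbij.surjective.nonempty),
    Set.subsingleton_coe _ |>.1 hbij.injective.subsingleton, hfin⟩
end

section
/- Let G be a finite, connected simple graph that is 3-edge-connected: for every pair of edges e, f of G, the graph obtained from G by deleting e and f is still connected. Then there exist three spanning trees T₁, T₂, T₃ of G such that every edge of G belongs to at most two of T₁, T₂, T₃. -/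
open SimpleGraph

/-!
Three spanning trees with no common edge exist iff the edges of `G` can be covered by three sets,
the deletion of any one of which leaves `G` connected. Such sets are the independent sets of the
cographic matroid of `G`, whose rank function is `S ↦ |S| + 1 - c(G - S)`, where `c` counts
connected components. By Edmonds' matroid partition theorem, a cover by three of them exists as
soon as `|S| ≤ 3 (|S| + 1 - c(G - S))` for every set `S` of edges. If `c(G - S) ≥ 2`, each
component of `G - S` is met by at least three edges of `S` and each edge of `S` meets at most two
components, so `3 c(G - S) ≤ 2 |S|`; if `c(G - S) = 1`, the inequality is clear.
-/

open Finset

section MatroidPartition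

variable {α ι : Type*} [DecidableEq α]

/-- The rank axioms of a matroid, for an integer-valued function on finite sets. Submodularity is
encoded as diminishing returns on inserting a single element. A finite set `I` is independent for
`r` when `#I ≤ r I`. -/
structure IsMatroidRank (r : Finset α → ℤ) : Prop where
  empty : r ∅ = 0
  le_insert (e : α) (S : Finset α) : r S ≤ r (insert e S)
  insert_le (e : α) (S : Finset α) : r (insert e S) ≤ r S + 1
  insert_add_le (e : α) {S T : Finset α} (hST : S ⊆ T) :
    r (insert e T) + r S ≤ r (insert e S) + r T

/-- The rank function of the contraction by `e` of the matroid with rank function `r`. -/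
def contractRank (r : Finset α → ℤ) (e : α) (S : Finset α) : ℤ :=
  r (insert e S) - r {e}

lemma card_insert_le_rank_insert {r : Finset α → ℤ} {e : α} {I : Finset α} (he : 0 < r {e})
    (hI : #I ≤ contractRank r e I) : #(insert e I) ≤ r (insert e I) := by
  have hcard : (#(insert e I) : ℤ) ≤ #I + 1 := mod_cast card_insert_le e I
  rw [contractRank] at hI
  linarith

lemma sum_update_contractRank [Fintype ι] [DecidableEq ι] (r : ι → Finset α → ℤ) (i : ι) (e : α)
    (S : Finset α) :
    ∑ j, Function.update r i (contractRank (r i) e) j S =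
      ∑ j, r j S + (r i (insert e S) - r i S) - r i {e} := by
  have hother : ∑ j ∈ univ.erase i, Function.update r i (contractRank (r i) e) j S =
      ∑ j ∈ univ.erase i, r j S :=
    sum_congr rfl fun j hj ↦ by rw [Function.update_of_ne (ne_of_mem_erase hj)]
  rw [← add_sum_erase _ _ (mem_univ i), hother, ← add_sum_erase _ (fun j ↦ r j S) (mem_univ i),
    Function.update_self, contractRank]
  ring

namespace IsMatroidRank

lemma union_add_le {r : Finset α → ℤ} (hr : IsMatroidRank r) {A B : Finset α} (hAB : A ⊆ B)
    (D : Finset α) : r (B ∪ D) + r A ≤ r (A ∪ D) + r B := by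
  induction D using Finset.induction_on with
  | empty => simp [add_comm]
  | insert e D _ ih =>
    have hmarginal := hr.insert_add_le e (union_subset_union_left (t := D) hAB)
    rw [union_insert, union_insert]
    linarith

lemma union_add_inter_le {r : Finset α → ℤ} (hr : IsMatroidRank r) (S T : Finset α) :
    r (S ∪ T) + r (S ∩ T) ≤ r S + r T := by
  have h := hr.union_add_le (inter_subset_left : S ∩ T ⊆ S) T
  rw [union_eq_right.2 inter_subset_right] at h
  linarith

lemma contract {r : Finset α → ℤ} (hr : IsMatroidRank r) (e : α) :
    IsMatroidRank (contractRank r e) where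
  empty := by simp [contractRank]
  le_insert a S := by
    simp only [contractRank, Finset.insert_comm e a]
    linarith [hr.le_insert a (insert e S)]
  insert_le a S := by
    simp only [contractRank, Finset.insert_comm e a]
    linarith [hr.insert_le a (insert e S)]
  insert_add_le a S T hST := by
    simp only [contractRank, Finset.insert_comm e a]
    linarith [hr.insert_add_le a (insert_subset_insert e hST)]

variable [Fintype ι] {r : ι → Finset α → ℤ}

lemma sum_union_le_card (hr : ∀ i, IsMatroidRank (r i)) {S T : Finset α}
    (hS : ∑ i, r i S ≤ #S) (hT : ∑ i, r i T ≤ #T)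
    (hST : #(S ∩ T) ≤ ∑ i, r i (S ∩ T)) : ∑ i, r i (S ∪ T) ≤ #(S ∪ T) := by
  have hsub := sum_le_sum fun i (_ : i ∈ univ) ↦ (hr i).union_add_inter_le S T
  simp only [sum_add_distrib] at hsub
  have hcard : (#(S ∪ T) : ℤ) + #(S ∩ T) = #S + #T := mod_cast card_union_add_card_inter S T
  linarith

lemma sum_biUnion_le_card (hr : ∀ i, IsMatroidRank (r i)) {E : Finset α}
    (hE : ∀ S ⊆ E, #S ≤ ∑ i, r i S) {κ : Type*} (K : Finset κ) {S : κ → Finset α}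
    (hSE : ∀ k, S k ⊆ E) (htight : ∀ k, ∑ i, r i (S k) ≤ #(S k)) :
    ∑ i, r i (K.biUnion S) ≤ #(K.biUnion S) := by
  classical
  induction K using Finset.induction_on with
  | empty => simp [(hr _).empty]
  | insert k K _ ih =>
    rw [biUnion_insert]
    exact sum_union_le_card hr (htight k) ih (hE _ (inter_subset_left.trans (hSE k)))

/-- If every index `i` failed through some `S i`, then each `S i` would be tight with `e` in its
`i`-th closure, and so the union of all `S i` would be tight with `e` in all of its closures. -/
lemma exists_forall_card_lt_sum_add_marginal (hr : ∀ i, IsMatroidRank (r i)) {E : Finset α}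
    {e : α} (he : e ∉ E) (hE : ∀ S ⊆ insert e E, #S ≤ ∑ i, r i S) :
    ∃ i, ∀ S ⊆ E, #S < ∑ j, r j S + (r i (insert e S) - r i S) := by
  by_contra! hfail
  choose S hSE hS using hfail
  have hEsub : ∀ T ⊆ E, #T ≤ ∑ j, r j T := fun T hT ↦ hE T (hT.trans (subset_insert e E))
  have htight (i : ι) : ∑ j, r j (S i) ≤ #(S i) := by
    linarith [hS i, (hr i).le_insert e (S i)]
  have hclosure (i : ι) : r i (insert e (S i)) ≤ r i (S i) := by
    linarith [hS i, hEsub (S i) (hSE i)]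
  set U := univ.biUnion S
  have hUE : U ⊆ E := biUnion_subset.2 fun i _ ↦ hSE i
  have hUclosure (i : ι) : r i (insert e U) ≤ r i U := by
    linarith [hclosure i, (hr i).insert_add_le e (subset_biUnion_of_mem S (mem_univ i))]
  have hcard : #U + 1 ≤ ∑ j, r j (insert e U) := by
    simpa [card_insert_of_notMem fun h ↦ he (hUE h)] using hE _ (insert_subset_insert e hUE)
  linarith [sum_le_sum fun i (_ : i ∈ univ) ↦ hUclosure i,
    sum_biUnion_le_card hr hEsub univ hSE htight]

/-- Edmonds' matroid partition theorem, by induction on `E`: place `e` in some class `i` and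
contract it in the `i`-th matroid. -/
theorem exists_indep_cover (hr : ∀ i, IsMatroidRank (r i)) (E : Finset α)
    (hE : ∀ S ⊆ E, #S ≤ ∑ i, r i S) :
    ∃ I : ι → Finset α, (∀ i, #(I i) ≤ r i (I i)) ∧ ∀ e ∈ E, ∃ i, e ∈ I i := by
  classical
  induction E using Finset.induction_on generalizing r with
  | empty => exact ⟨fun _ ↦ ∅, by simp [(hr _).empty], by simp⟩
  | insert e E he ih =>
    obtain ⟨i, hi⟩ := exists_forall_card_lt_sum_add_marginal hr he hE
    have he_pos : 0 < r i {e} := by simpa [(hr _).empty] using hi ∅ (empty_subset E)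
    have he_le : r i {e} ≤ 1 := by simpa [(hr i).empty] using (hr i).insert_le e ∅
    have hr' : ∀ j, IsMatroidRank (Function.update r i (contractRank (r i) e) j) :=
      (Function.forall_update_iff r fun _ ↦ IsMatroidRank).2 ⟨(hr i).contract e, fun j _ ↦ hr j⟩
    obtain ⟨J, hJ, hcover⟩ := ih hr' fun S hS ↦ by
      linarith [hi S hS, sum_update_contractRank r i e S]
    refine ⟨Function.update J i (insert e (J i)), fun j ↦ ?_, fun f hf ↦ ?_⟩
    · have hJj := hJ j
      obtain rfl | hji := eq_or_ne j i
      · rw [Function.update_self] at hJj ⊢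
        exact card_insert_le_rank_insert he_pos hJj
      · rwa [Function.update_of_ne hji] at hJj ⊢
    · obtain rfl | hfE := mem_insert.1 hf
      · exact ⟨i, by simp⟩
      · obtain ⟨j, hj⟩ := hcover f hfE
        obtain rfl | hji := eq_or_ne j i
        · exact ⟨j, by simp [hj]⟩
        · exact ⟨j, by simpa [hji] using hj⟩

end IsMatroidRank

end MatroidPartition

section Components

variable {V : Type*} {H : SimpleGraph V} {e : Sym2 V}

lemma reachable_deleteEdges_of_not_isBridge (he : ¬ H.IsBridge e) {x y : V}
    (hxy : H.Reachable x y) : (H.deleteEdges {e}).Reachable x y := by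
  obtain ⟨p⟩ := hxy
  induction p with
  | nil => rfl
  | @cons x z y hxz _ ih =>
    refine Reachable.trans ?_ ih
    by_cases h : s(x, z) = e
    · subst h
      simpa [isBridge_iff] using he
    · exact (deleteEdges_adj.2 ⟨hxz, h⟩).reachable

lemma card_connectedComponent_deleteEdges_of_not_isBridge (he : ¬ H.IsBridge e) :
    Nat.card (H.deleteEdges {e}).ConnectedComponent = Nat.card H.ConnectedComponent := by
  refine Nat.card_eq_of_bijective _
    ⟨?_, ConnectedComponent.surjective_map_ofLE (H.deleteEdges_le {e})⟩
  intro C D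
  induction C, D using ConnectedComponent.ind₂ with
  | _ x y =>
    intro hxy
    exact ConnectedComponent.sound
      (reachable_deleteEdges_of_not_isBridge he (ConnectedComponent.exact hxy))

lemma card_connectedComponent_lt_of_isBridge [Finite V] (he : e ∈ H.edgeSet)
    (hbridge : H.IsBridge e) :
    Nat.card H.ConnectedComponent < Nat.card (H.deleteEdges {e}).ConnectedComponent := by
  have hsurj := ConnectedComponent.surjective_map_ofLE (H.deleteEdges_le {e})
  refine (Nat.card_le_card_of_surjective _ hsurj).lt_of_ne fun hcard ↦ ?_
  have hinj := ((Nat.bijective_iff_surjective_and_card _).2 ⟨hsurj, hcard.symm⟩).injective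
  induction e with
  | _ u v =>
    exact hbridge (ConnectedComponent.exact (hinj
      (ConnectedComponent.sound (Adj.reachable he) :
        H.connectedComponentMk u = H.connectedComponentMk v)))

lemma injOn_map_connectedComponent_deleteEdges (u v : V) :
    Set.InjOn (ConnectedComponent.map (Hom.ofLE (H.deleteEdges_le {s(u, v)})))
      {(H.deleteEdges {s(u, v)}).connectedComponentMk v}ᶜ := by
  intro C
  induction C using ConnectedComponent.ind with
  | _ x =>
    intro hx D
    induction D using ConnectedComponent.ind with
    | _ y =>
      intro hy hxy
      obtain ⟨p, hp⟩ := (ConnectedComponent.exact hxy : H.Reachable x y).exists_isPath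
      have havoid : s(u, v) ∉ p.edges := hp.isTrail.not_mem_edges_of_not_reachable
        (fun h ↦ hx (ConnectedComponent.sound h)) (fun h ↦ hy (ConnectedComponent.sound h))
      exact ConnectedComponent.sound (reachable_deleteEdges_iff_exists_walk.2 ⟨p, havoid⟩)

lemma card_connectedComponent_deleteEdges_singleton_le [Finite V] :
    Nat.card (H.deleteEdges {e}).ConnectedComponent ≤ Nat.card H.ConnectedComponent + 1 := by
  induction e with
  | _ u v =>
    have hle := Set.ncard_le_ncard_of_injOn (t := Set.univ) _ (fun _ _ ↦ Set.mem_univ _)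
      (injOn_map_connectedComponent_deleteEdges (H := H) u v)
    rw [Set.ncard_univ, Set.ncard_compl, Set.ncard_singleton] at hle
    omega

open Classical in
lemma card_connectedComponent_deleteEdges_singleton [Finite V] (H : SimpleGraph V) (e : Sym2 V) :
    Nat.card (H.deleteEdges {e}).ConnectedComponent =
      Nat.card H.ConnectedComponent + if e ∈ H.edgeSet ∧ H.IsBridge e then 1 else 0 := by
  split_ifs with h
  · exact card_connectedComponent_deleteEdges_singleton_le.antisymm
      (card_connectedComponent_lt_of_isBridge h.1 h.2)
  · by_cases he : e ∈ H.edgeSet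
    · exact card_connectedComponent_deleteEdges_of_not_isBridge fun hb ↦ h ⟨he, hb⟩
    · rw [deleteEdges_eq_self.2 (Set.disjoint_singleton_right.2 he), add_zero]

lemma connected_of_card_connectedComponent_le_one [Finite V] [Nonempty V]
    (h : Nat.card H.ConnectedComponent ≤ 1) : H.Connected := by
  have := Finite.card_le_one_iff_subsingleton.1 h
  exact ⟨fun x y ↦ ConnectedComponent.exact (Subsingleton.elim _ _)⟩

lemma card_connectedComponent_of_connected (h : H.Connected) :
    Nat.card H.ConnectedComponent = 1 := by
  have := h.preconnected.subsingleton_connectedComponent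
  have := h.nonempty
  exact Nat.card_unique

end Components

section CographicRank

variable {V : Type*}

/-- The rank function of the cographic matroid of `G`, whose independent sets are the sets of edges
that can be deleted without increasing the number of connected components. Elements of `Sym2 V`
that are not edges of `G` count as coloops. -/
noncomputable def cographicRank (G : SimpleGraph V) (S : Finset (Sym2 V)) : ℤ :=
  #S + Nat.card G.ConnectedComponent -
    Nat.card (G.deleteEdges (S : Set (Sym2 V))).ConnectedComponent

open Classical in
lemma cographicRank_insert_of_notMem [DecidableEq V] [Finite V] (G : SimpleGraph V)
    {S : Finset (Sym2 V)} {e : Sym2 V} (he : e ∉ S) :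
    cographicRank G (insert e S) = cographicRank G S +
      if e ∈ G.edgeSet ∧ (G.deleteEdges (S : Set (Sym2 V))).IsBridge e then 0 else 1 := by
  have hdelete : G.deleteEdges ((insert e S : Finset (Sym2 V)) : Set (Sym2 V)) =
      (G.deleteEdges (S : Set (Sym2 V))).deleteEdges {e} := by
    rw [deleteEdges_deleteEdges, coe_insert, Set.union_singleton]
  have hedge : e ∈ (G.deleteEdges (S : Set (Sym2 V))).edgeSet ↔ e ∈ G.edgeSet := by
    simp [edgeSet_deleteEdges, he]
  simp only [cographicRank, hdelete, card_connectedComponent_deleteEdges_singleton, hedge,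
    card_insert_of_notMem he]
  split_ifs <;> push_cast <;> ring

lemma cographicRank_le_insert [DecidableEq V] [Finite V] (G : SimpleGraph V) (e : Sym2 V)
    (S : Finset (Sym2 V)) : cographicRank G S ≤ cographicRank G (insert e S) := by
  by_cases he : e ∈ S
  · rw [insert_eq_of_mem he]
  · rw [cographicRank_insert_of_notMem G he]
    split_ifs <;> linarith

lemma cographicRank_insert_le [DecidableEq V] [Finite V] (G : SimpleGraph V) (e : Sym2 V)
    (S : Finset (Sym2 V)) : cographicRank G (insert e S) ≤ cographicRank G S + 1 := by
  by_cases he : e ∈ S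
  · rw [insert_eq_of_mem he]
    linarith
  · rw [cographicRank_insert_of_notMem G he]
    split_ifs <;> linarith

/-- Deleting further edges cannot turn a bridge into a non-bridge. -/
lemma cographicRank_insert_add_le [DecidableEq V] [Finite V] (G : SimpleGraph V) (e : Sym2 V)
    {S T : Finset (Sym2 V)} (hST : S ⊆ T) :
    cographicRank G (insert e T) + cographicRank G S ≤
      cographicRank G (insert e S) + cographicRank G T := by
  by_cases heT : e ∈ T
  · rw [insert_eq_of_mem heT]
    linarith [cographicRank_le_insert G e S]
  · have hbridge : (G.deleteEdges (S : Set (Sym2 V))).IsBridge e →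
        (G.deleteEdges (T : Set (Sym2 V))).IsBridge e :=
      IsBridge.anti (deleteEdges_anti (coe_subset.2 hST))
    rw [cographicRank_insert_of_notMem G heT,
      cographicRank_insert_of_notMem G fun heS ↦ heT (hST heS)]
    split_ifs <;> first | linarith | tauto

theorem isMatroidRank_cographicRank [DecidableEq V] [Finite V] (G : SimpleGraph V) :
    IsMatroidRank (cographicRank G) where
  empty := by simp [cographicRank]
  le_insert := cographicRank_le_insert G
  insert_le := cographicRank_insert_le G
  insert_add_le := cographicRank_insert_add_le G

end CographicRank

section SpanningTrees

variable {V : Type*} {G : SimpleGraph V}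

/-- With `n = card ι` and `c` the number of components, the hypothesis says
`n (c(G - S) - 1) ≤ (n - 1) |S|`, rearranged so that no subtraction occurs. -/
theorem exists_isTree_family_of_card_connectedComponent_le [Finite V] {ι : Type*}
    [Fintype ι] (hG : G.Connected)
    (hcut : ∀ S : Finset (Sym2 V), (S : Set (Sym2 V)) ⊆ G.edgeSet →
      Fintype.card ι * Nat.card (G.deleteEdges (S : Set (Sym2 V))).ConnectedComponent + #S ≤
        Fintype.card ι * (#S + 1)) :
    ∃ T : ι → SimpleGraph V, (∀ i, T i ≤ G ∧ (T i).IsTree) ∧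
      ∀ e ∈ G.edgeSet, ∃ i, e ∉ (T i).edgeSet := by
  classical
  have := hG.nonempty
  have hrank : ∀ S ⊆ G.edgeSet.toFinite.toFinset, #S ≤ ∑ _i : ι, cographicRank G S := by
    intro S hS
    have hcutS := hcut S fun e he ↦ by simpa using hS he
    zify at hcutS
    simp only [cographicRank, card_connectedComponent_of_connected hG, sum_const, card_univ,
      nsmul_eq_mul]
    push_cast
    linarith
  obtain ⟨I, hindep, hcover⟩ :=
    IsMatroidRank.exists_indep_cover (fun _ ↦ isMatroidRank_cographicRank G) _ hrank
  have hconn (i : ι) : (G.deleteEdges (I i : Set (Sym2 V))).Connected := by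
    refine connected_of_card_connectedComponent_le_one ?_
    have hi := hindep i
    rw [cographicRank, card_connectedComponent_of_connected hG] at hi
    omega
  choose T hT htree using fun i ↦ (hconn i).exists_isTree_le
  refine ⟨T, fun i ↦ ⟨(hT i).trans (deleteEdges_le _), htree i⟩, fun e he ↦ ?_⟩
  obtain ⟨i, hi⟩ := hcover e (by simpa using he)
  refine ⟨i, fun heT ↦ ?_⟩
  have hdeleted := edgeSet_mono (hT i) heT
  rw [edgeSet_deleteEdges] at hdeleted
  exact hdeleted.2 hi

open Classical in
lemma le_card_edges_meeting_component {k : ℕ} (hG : G.IsEdgeConnected k) (S : Finset (Sym2 V))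
    (hS : 1 < Nat.card (G.deleteEdges (S : Set (Sym2 V))).ConnectedComponent)
    (C : (G.deleteEdges (S : Set (Sym2 V))).ConnectedComponent) :
    k ≤ #{s ∈ S | ∃ v ∈ s, v ∈ C.supp} := by
  by_contra! hlt
  have := Nat.finite_of_card_ne_zero (Nat.ne_zero_of_lt hS)
  have := Finite.one_lt_card_iff_nontrivial.1 hS
  obtain ⟨D, hDC⟩ := exists_ne C
  obtain ⟨x, hx⟩ := C.nonempty_supp
  obtain ⟨y, hy⟩ := D.nonempty_supp
  have hyC : y ∉ C.supp := fun h ↦ hDC (ConnectedComponent.eq_of_common_vertex hy h)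
  obtain ⟨p⟩ := hG x y (s := {s ∈ S | ∃ v ∈ s, v ∈ C.supp}) (by
    rw [← coe_filter, Set.encard_coe_eq_coe_finsetCard]
    exact_mod_cast hlt)
  obtain ⟨d, -, hfst, hsnd⟩ := p.exists_boundary_dart C.supp hx hyC
  have hdS : s(d.fst, d.snd) ∉ S := fun h ↦
    (deleteEdges_adj.1 d.adj).2 ⟨h, d.fst, by simp, hfst⟩
  exact hsnd (C.mem_supp_of_adj_mem_supp hfst
    (deleteEdges_adj.2 ⟨(deleteEdges_adj.1 d.adj).1, hdS⟩))

lemma mul_card_connectedComponent_deleteEdges_le {k : ℕ} (hG : G.IsEdgeConnected k)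
    (S : Finset (Sym2 V))
    (hS : 1 < Nat.card (G.deleteEdges (S : Set (Sym2 V))).ConnectedComponent) :
    Nat.card (G.deleteEdges (S : Set (Sym2 V))).ConnectedComponent * k ≤ #S * 2 := by
  classical
  have := Nat.finite_of_card_ne_zero (Nat.ne_zero_of_lt hS)
  have := Fintype.ofFinite (G.deleteEdges (S : Set (Sym2 V))).ConnectedComponent
  rw [Nat.card_eq_fintype_card, ← card_univ]
  refine card_mul_le_card_mul
    (fun (C : (G.deleteEdges (S : Set (Sym2 V))).ConnectedComponent) s ↦ ∃ v ∈ s, v ∈ C.supp)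
    (fun C _ ↦ le_card_edges_meeting_component hG S hS C) fun s _ ↦ ?_
  induction s with
  | _ x y =>
    refine (card_le_card fun C hC ↦ ?_).trans (card_le_two
      (a := connectedComponentMk _ x) (b := connectedComponentMk _ y))
    simpa [mem_bipartiteBelow, eq_comm] using hC

/-- The last hypothesis says `2 n ≤ (n - 1) k` for `n = card ι`, without truncated subtraction. -/
theorem exists_isTree_family_of_isEdgeConnected [Finite V] [Nonempty V] {ι : Type*}
    [Fintype ι] {k : ℕ} (hk : k ≠ 0) (hG : G.IsEdgeConnected k)
    (hιk : 2 * Fintype.card ι + k ≤ Fintype.card ι * k) :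
    ∃ T : ι → SimpleGraph V, (∀ i, T i ≤ G ∧ (T i).IsTree) ∧
      ∀ e ∈ G.edgeSet, ∃ i, e ∉ (T i).edgeSet := by
  refine exists_isTree_family_of_card_connectedComponent_le (hG.connected hk) fun S _ ↦ ?_
  have hcount := mul_card_connectedComponent_deleteEdges_le hG S
  obtain ⟨m, hm⟩ : ∃ m, Fintype.card ι = m + 1 :=
    Nat.exists_eq_succ_of_ne_zero fun h ↦ hk (by simpa [h] using hιk)
  rw [hm] at hιk ⊢
  set c := Nat.card (G.deleteEdges (S : Set (Sym2 V))).ConnectedComponent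
  obtain hc | hc := le_or_gt c 1
  · nlinarith
  · have hmk : 2 * (m + 1) ≤ m * k := by linarith
    have : 2 * ((m + 1) * c) ≤ 2 * (m * #S) := calc
      2 * ((m + 1) * c) = 2 * (m + 1) * c := by ring
      _ ≤ m * k * c := Nat.mul_le_mul_right c hmk
      _ = m * (c * k) := by ring
      _ ≤ m * (#S * 2) := Nat.mul_le_mul_left m (hcount hc)
      _ = 2 * (m * #S) := by ring
    linarith

lemma isEdgeConnected_three_of_connected_deleteEdges_pair (hG : G.Connected)
    (hpair : ∀ e ∈ G.edgeSet, ∀ f ∈ G.edgeSet, (G.deleteEdges {e, f}).Connected) :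
    G.IsEdgeConnected 3 := by
  have hall (e f : Sym2 V) : (G.deleteEdges {e, f}).Connected := by
    rw [deleteEdges_eq_inter_edgeSet]
    by_cases he : e ∈ G.edgeSet <;> by_cases hf : f ∈ G.edgeSet
    · simpa [Set.insert_inter_of_mem, he, hf] using hpair e he f hf
    · simpa [Set.insert_inter_of_mem, Set.insert_inter_of_notMem, he, hf] using hpair e he e he
    · simpa [Set.insert_inter_of_mem, Set.insert_inter_of_notMem, he, hf] using hpair f hf f hf
    · simpa [Set.insert_inter_of_mem, Set.insert_inter_of_notMem, he, hf] using hG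
  rw [isEdgeConnected_add_one two_ne_zero]
  intro e
  rw [isEdgeConnected_two]
  intro f
  rw [deleteEdges_deleteEdges, Set.singleton_union]
  exact (hall e f).preconnected

end SpanningTrees

/-- A finite, connected, 3-edge-connected simple graph admits three spanning
trees such that every edge belongs to at most two of them. -/
theorem stmt11 {V : Type*} [Finite V] (G : SimpleGraph V) (hconn : G.Connected)
    (h3ec : ∀ e ∈ G.edgeSet, ∀ f ∈ G.edgeSet, (G.deleteEdges {e, f}).Connected) :
    ∃ T₁ T₂ T₃ : SimpleGraph V,
      (T₁ ≤ G ∧ T₁.Connected ∧ T₁.IsAcyclic) ∧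
      (T₂ ≤ G ∧ T₂.Connected ∧ T₂.IsAcyclic) ∧
      (T₃ ≤ G ∧ T₃.Connected ∧ T₃.IsAcyclic) ∧
      (∀ e ∈ G.edgeSet, ¬ (e ∈ T₁.edgeSet ∧ e ∈ T₂.edgeSet ∧ e ∈ T₃.edgeSet)) := by
  have := hconn.nonempty
  obtain ⟨T, hT, havoid⟩ := exists_isTree_family_of_isEdgeConnected (ι := Fin 3) three_ne_zero
    (isEdgeConnected_three_of_connected_deleteEdges_pair hconn h3ec) (by simp)
  have hspanning (i : Fin 3) : T i ≤ G ∧ (T i).Connected ∧ (T i).IsAcyclic :=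
    ⟨(hT i).1, (hT i).2.connected, (hT i).2.isAcyclic⟩
  refine ⟨T 0, T 1, T 2, hspanning 0, hspanning 1, hspanning 2, fun e he ⟨h₀, h₁, h₂⟩ ↦ ?_⟩
  obtain ⟨i, hi⟩ := havoid e he
  fin_cases i
  exacts [hi h₀, hi h₁, hi h₂]
end
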